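/- Let ℓ ≥ 2 and θ ∈ ℂ^(ℤ/ℓℤ) with Σ_{i ∈ ℤ/ℓℤ} θ_i ≠ 0, and let d ∈ ℕ^(ℤ/ℓℤ). Then d ∈ E_θ if and only if there exist an integer n ≥ 0 and θ′ ∈ ℂ^(ℤ/ℓℤ) such that (d, θ) ~ (n·δ_ℓ, θ′), where δ_ℓ ∈ ℤ^(ℤ/ℓℤ) is the vector with all entries 1. -/

import Mathlib

namespace CM

/-- The (non-linear) action of the simple reflection `s_j` on `ℤ^(ℤ/ℓℤ)`. -/
def sInt (ℓ : ℕ) (j : ZMod ℓ) (d : ZMod ℓ → ℤ) : ZMod ℓ → ℤ := fun i =>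
  if i = j then (if j = 0 then 1 else 0) + d (j + 1) + d (j - 1) - d j else d i

/-- The linear action of the simple reflection `s_j` on `ℂ^(ℤ/ℓℤ)`.
For `i ≠ j` the coefficient of `θ j` is the number of arrows between `i` and `j`
(which is `2` when `ℓ = 2`). -/
def sC (ℓ : ℕ) (j : ZMod ℓ) (θ : ZMod ℓ → ℂ) : ZMod ℓ → ℂ := fun i =>
  if i = j then -θ j
  else θ i + ((if i = j - 1 then 1 else 0) + (if i = j + 1 then 1 else 0) : ℂ) * θ j

/-- Transport along an equality of vertices. -/
def castMap {ℓ : ℕ} (d : ZMod ℓ → ℕ) {i j : ZMod ℓ} (h : i = j) :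
    (Fin (d i) → ℂ) →ₗ[ℂ] (Fin (d j) → ℂ) :=
  LinearMap.funLeft ℂ ℂ (Fin.cast (congrArg d h.symm))

/-- A framed `θ`-representation of the cyclic quiver with dimension vector `d`
(dimension `1` at the framing vertex `∞`).  The moment map relation at the vertex
`i + 1` reads `X_{i+1} ∘ Y_{i+1} - Y_i ∘ X_i + δ_{i+1,0} · x ∘ y = θ_{i+1} · id`. -/
structure FRep (ℓ : ℕ) (θ : ZMod ℓ → ℂ) (d : ZMod ℓ → ℕ) where
  X : ∀ i : ZMod ℓ, (Fin (d (i + 1)) → ℂ) →ₗ[ℂ] (Fin (d i) → ℂ)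
  Y : ∀ i : ZMod ℓ, (Fin (d i) → ℂ) →ₗ[ℂ] (Fin (d (i + 1)) → ℂ)
  x : ℂ →ₗ[ℂ] (Fin (d 0) → ℂ)
  y : (Fin (d 0) → ℂ) →ₗ[ℂ] ℂ
  rel : ∀ i : ZMod ℓ,
    X (i + 1) ∘ₗ Y (i + 1) - Y i ∘ₗ X i +
      (if h : i + 1 = (0 : ZMod ℓ) then castMap d h.symm ∘ₗ x ∘ₗ y ∘ₗ castMap d h else 0) =
    θ (i + 1) • LinearMap.id

/-- A subrepresentation of a framed representation. -/
structure FSubrep {ℓ : ℕ} {θ : ZMod ℓ → ℂ} {d : ZMod ℓ → ℕ} (R : FRep ℓ θ d) where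
  U : ∀ i : ZMod ℓ, Submodule ℂ (Fin (d i) → ℂ)
  Uinf : Submodule ℂ ℂ
  hX : ∀ i : ZMod ℓ, ∀ v ∈ U (i + 1), R.X i v ∈ U i
  hY : ∀ i : ZMod ℓ, ∀ v ∈ U i, R.Y i v ∈ U (i + 1)
  hx : ∀ z ∈ Uinf, R.x z ∈ U 0
  hy : ∀ v ∈ U 0, R.y v ∈ Uinf

/-- A framed representation is simple if its only subrepresentations are zero and itself. -/
def FSimple {ℓ : ℕ} {θ : ZMod ℓ → ℂ} {d : ZMod ℓ → ℕ} (R : FRep ℓ θ d) : Prop :=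
  ∀ S : FSubrep R,
    ((∀ i, S.U i = ⊥) ∧ S.Uinf = ⊥) ∨ ((∀ i, S.U i = ⊤) ∧ S.Uinf = ⊤)

/-- `E_θ`: the set of dimension vectors of simple framed `θ`-representations. -/
def Eset (ℓ : ℕ) (θ : ZMod ℓ → ℂ) : Set (ZMod ℓ → ℕ) :=
  {d | ∃ R : FRep ℓ θ d, FSimple R}

/-- One step of the equivalence: `(d, θ) ↦ (s_j(d), s_j(θ))` for some `j` with `θ_j ≠ 0`. -/
def MoveRel (ℓ : ℕ) (p q : (ZMod ℓ → ℤ) × (ZMod ℓ → ℂ)) : Prop :=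
  ∃ j : ZMod ℓ, p.2 j ≠ 0 ∧ q = (sInt ℓ j p.1, sC ℓ j p.2)

/-! ### Combinatorics -/

lemma convex_const (ℓ : ℕ) [NeZero ℓ] (a : ZMod ℓ → ℤ)
    (h : ∀ j, 2 * a j ≤ (if j = 0 then 1 else 0) + a (j + 1) + a (j - 1)) :
    ∀ i, a i = a 0 := by
  classical
  have s1 : ∀ f : ZMod ℓ → ℤ, ∑ j, f (j + 1) = ∑ j, f j := fun f =>
    Equiv.sum_comp (Equiv.addRight (1 : ZMod ℓ)) f
  have s2 : ∀ f : ZMod ℓ → ℤ, ∑ j, f (j - 1) = ∑ j, f j := fun f =>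
    Equiv.sum_comp (Equiv.subRight (1 : ZMod ℓ)) f
  have t1 : ∀ f : ZMod ℓ → ZMod ℓ, ∑ j, f (j + 1) = ∑ j, f j := fun f =>
    Equiv.sum_comp (Equiv.addRight (1 : ZMod ℓ)) f
  have t2 : ∀ f : ZMod ℓ → ZMod ℓ, ∑ j, f (j - 1) = ∑ j, f j := fun f =>
    Equiv.sum_comp (Equiv.subRight (1 : ZMod ℓ)) f
  set e : ZMod ℓ → ℤ := fun j => (if j = 0 then 1 else 0) + a (j + 1) + a (j - 1) - 2 * a j with he
  have e0 : ∀ j, 0 ≤ e j := fun j => by have := h j; simp only [he]; linarith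
  have esum : ∑ j, e j = 1 := by
    simp only [he, Finset.sum_sub_distrib, Finset.sum_add_distrib, s1, s2, ← Finset.mul_sum]
    simp
    ring
  have ew : ∑ j, (e j : ZMod ℓ) * j = 0 := by
    have h1 : ∑ j : ZMod ℓ, (a (j + 1) : ZMod ℓ) * j = ∑ j : ZMod ℓ, (a j : ZMod ℓ) * (j - 1) := by
      rw [← t1 (fun j => (a j : ZMod ℓ) * (j - 1))]; simp
    have h2 : ∑ j : ZMod ℓ, (a (j - 1) : ZMod ℓ) * j = ∑ j : ZMod ℓ, (a j : ZMod ℓ) * (j + 1) := by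
      rw [← t2 (fun j => (a j : ZMod ℓ) * (j + 1))]; simp
    have h3 : ∀ j : ZMod ℓ, (e j : ZMod ℓ) * j = (a (j + 1) : ZMod ℓ) * j + (a (j - 1) : ZMod ℓ) * j
        - 2 * ((a j : ZMod ℓ) * j) := by
      intro j
      simp only [he]
      push_cast
      by_cases hj : j = 0
      · simp [hj]
      · simp [hj]; ring
    simp only [h3, Finset.sum_sub_distrib, Finset.sum_add_distrib, h1, h2, ← Finset.mul_sum,
      mul_sub, mul_add]
    ring
  obtain ⟨k, hk⟩ : ∃ k, 0 < e k := by
    by_contra hc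
    push Not at hc
    have : ∑ j, e j ≤ 0 := Finset.sum_nonpos fun j _ => hc j
    omega
  have hsplit : ∑ j, e j = e k + ∑ j ∈ Finset.univ.erase k, e j :=
    (Finset.add_sum_erase _ _ (Finset.mem_univ k)).symm
  have hnn : 0 ≤ ∑ j ∈ Finset.univ.erase k, e j := Finset.sum_nonneg fun j _ => e0 j
  have hek : e k = 1 := by omega
  have hrest : ∀ j, j ≠ k → e j = 0 := by
    have : ∑ j ∈ Finset.univ.erase k, e j = 0 := by omega
    rw [Finset.sum_eq_zero_iff_of_nonneg (fun j _ => e0 j)] at this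
    intro j hj
    exact this j (by simp [hj])
  have hk0 : k = 0 := by
    rw [Finset.sum_eq_single k] at ew
    · simpa [hek] using ew
    · intro j _ hj; simp [hrest j hj]
    · simp
  subst hk0
  have hharm : ∀ j, a (j + 1) - a j = a j - a (j - 1) := by
    intro j
    by_cases hj : j = 0
    · subst hj
      simp only [he] at hek
      simp at hek ⊢
      linarith
    · have := hrest j hj
      simp only [he, if_neg hj] at this
      linarith
  have hb : ∀ m : ℕ, a ((m : ZMod ℓ) + 1) - a (m : ZMod ℓ) = a 1 - a 0 := by
    intro m
    induction m with
    | zero => simp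
    | succ m ih =>
      rw [hharm]; push_cast; rw [add_sub_cancel_right]; exact ih
  have hlin : ∀ m : ℕ, a (m : ZMod ℓ) = a 0 + m * (a 1 - a 0) := by
    intro m
    induction m with
    | zero => simp
    | succ m ih => have := hb m; push_cast; linarith
  have hl := hlin ℓ
  have hz : a 1 - a 0 = 0 := by
    have h0 : (ℓ : ℤ) ≠ 0 := by exact_mod_cast NeZero.ne ℓ
    simp at hl
    rcases hl with hl | hl
    · exact absurd hl (NeZero.ne ℓ)
    · exact hl
  intro i
  have := hlin i.val
  rw [hz] at this
  simpa using this

section refl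
variable {ℓ : ℕ}

lemma one_ne (hℓ : 2 ≤ ℓ) : (1 : ZMod ℓ) ≠ 0 := by
  have : Fact (1 < ℓ) := ⟨hℓ⟩
  exact one_ne_zero

lemma sInt_sInt (hℓ : 2 ≤ ℓ) (j : ZMod ℓ) (d : ZMod ℓ → ℤ) : sInt ℓ j (sInt ℓ j d) = d := by
  have := one_ne hℓ
  funext i
  simp only [sInt]
  by_cases h : i = j
  · subst h; simp [this]
  · simp [h]

lemma sC_sC (j : ZMod ℓ) (d : ZMod ℓ → ℂ) : sC ℓ j (sC ℓ j d) = d := by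
  funext i
  simp only [sC]
  by_cases h : i = j
  · subst h; simp
  · simp [h]

lemma sum_sC [NeZero ℓ] (hℓ : 2 ≤ ℓ) (j : ZMod ℓ) (θ : ZMod ℓ → ℂ) :
    ∑ i, sC ℓ j θ i = ∑ i, θ i := by
  have h1 := one_ne hℓ
  have : ∀ i, sC ℓ j θ i = θ i + ((if i = j - 1 then θ j else 0) + (if i = j + 1 then θ j else 0)
      - (if i = j then 2 * θ j else 0)) := by
    intro i
    simp only [sC]
    by_cases h : i = j
    · subst h
      have e1 : ¬ (i = i - 1) := by
        intro h; exact h1 (by linear_combination h)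
      have e2 : ¬ (i = i + 1) := by simpa [eq_comm] using h1
      simp only [if_neg e1, if_neg e2, if_true]; ring
    · simp only [if_neg h]; split_ifs <;> ring
  simp only [this, Finset.sum_add_distrib, Finset.sum_sub_distrib]
  simp
  ring

end refl

/-! ### Representations inside an ambient space -/

/-- A framed representation whose spaces are (not nec. independent) subspaces of `E`. -/
structure GRep (ℓ : ℕ) (θ : ZMod ℓ → ℂ) (E : Type) [AddCommGroup E] [Module ℂ E] where
  V : ZMod ℓ → Submodule ℂ E
  A : ZMod ℓ → E →ₗ[ℂ] E
  Y : ZMod ℓ → E →ₗ[ℂ] E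
  x : E
  y : E →ₗ[ℂ] ℂ
  hA : ∀ i, ∀ v ∈ V i, A i v ∈ V (i - 1)
  hY : ∀ i, ∀ v ∈ V i, Y i v ∈ V (i + 1)
  hx : x ∈ V 0
  rel : ∀ i, ∀ v ∈ V i, A (i + 1) (Y i v) - Y (i - 1) (A i v) + (if i = 0 then y v • x else 0)
    = θ i • v

structure GRep.Sub {ℓ : ℕ} {θ : ZMod ℓ → ℂ} {E : Type} [AddCommGroup E] [Module ℂ E]
    (R : GRep ℓ θ E) (U : ZMod ℓ → Submodule ℂ E) (T : Submodule ℂ ℂ) : Prop where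
  le : ∀ i, U i ≤ R.V i
  hA : ∀ i, ∀ v ∈ U i, R.A i v ∈ U (i - 1)
  hY : ∀ i, ∀ v ∈ U i, R.Y i v ∈ U (i + 1)
  hx : ∀ z ∈ T, z • R.x ∈ U 0
  hy : ∀ v ∈ U 0, R.y v ∈ T

def GRep.Simple {ℓ : ℕ} {θ : ZMod ℓ → ℂ} {E : Type} [AddCommGroup E] [Module ℂ E]
    (R : GRep ℓ θ E) : Prop :=
  ∀ U T, R.Sub U T → ((∀ i, U i = ⊥) ∧ T = ⊥) ∨ ((∀ i, U i = R.V i) ∧ T = ⊤)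

def GSet (ℓ : ℕ) (θ : ZMod ℓ → ℂ) (d : ZMod ℓ → ℕ) : Prop :=
  ∃ (E : Type) (_ : AddCommGroup E) (_ : Module ℂ E) (_ : FiniteDimensional ℂ E)
    (R : GRep ℓ θ E), R.Simple ∧ ∀ i, Module.finrank ℂ (R.V i) = d i

section conv
variable {ℓ : ℕ} {θ : ZMod ℓ → ℂ} {d : ZMod ℓ → ℕ}

lemma castMap_eval (d : ZMod ℓ → ℕ) {i j : ZMod ℓ} (h : i = j)
    (f : ∀ k, Fin (d k) → ℂ) : castMap d h (f i) = f j := by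
  subst h; rfl

lemma castMap_equiv {E : Type} [AddCommGroup E] [Module ℂ E] {V : ZMod ℓ → Submodule ℂ E}
    (φ : ∀ k, V k ≃ₗ[ℂ] (Fin (d k) → ℂ)) {i j : ZMod ℓ} (h : i = j) (w : Fin (d i) → ℂ) :
    ((φ j).symm (castMap d h w) : E) = (φ i).symm w := by
  subst h; rfl

lemma mem_Eset_of_GSet (h : GSet ℓ θ d) : d ∈ Eset ℓ θ := by
  obtain ⟨E, _, _, _, R, hR, hd⟩ := h
  have hφ : ∀ i, Nonempty (R.V i ≃ₗ[ℂ] (Fin (d i) → ℂ)) := fun i =>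
    ⟨LinearEquiv.ofFinrankEq _ _ (by simp [hd])⟩
  let φ := fun i => (hφ i).some
  have cX : ∀ i : ZMod ℓ, ∀ v : R.V (i + 1), R.A (i + 1) v ∈ R.V i := fun i v => by
    simpa using R.hA _ v v.2
  let S : FRep ℓ θ d :=
    { X := fun i => (φ i).toLinearMap ∘ₗ
        ((R.A (i + 1) ∘ₗ (R.V (i + 1)).subtype).codRestrict (R.V i) (cX i)) ∘ₗ
          (φ (i + 1)).symm.toLinearMap
      Y := fun i => (φ (i + 1)).toLinearMap ∘ₗ
        ((R.Y i ∘ₗ (R.V i).subtype).codRestrict (R.V (i + 1)) (fun v => R.hY _ v v.2)) ∘ₗ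
          (φ i).symm.toLinearMap
      x := (φ 0).toLinearMap ∘ₗ LinearMap.toSpanSingleton ℂ _ ⟨R.x, R.hx⟩
      y := R.y ∘ₗ (R.V 0).subtype ∘ₗ (φ 0).symm.toLinearMap
      rel := by
        intro i
        refine LinearMap.ext fun w => ?_
        apply (φ (i + 1)).symm.injective
        apply Subtype.ext
        have key := R.rel (i + 1) _ ((φ (i + 1)).symm w).2
        rw [add_sub_cancel_right] at key
        by_cases h : i + 1 = 0
        · rw [dif_pos h]
          rw [if_pos h] at key
          simp only [LinearMap.add_apply, LinearMap.sub_apply, LinearMap.comp_apply, map_add,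
            map_sub, Submodule.coe_add, Submodule.coe_sub, LinearEquiv.coe_coe,
            LinearEquiv.symm_apply_apply, castMap_equiv, LinearMap.smul_apply, map_smul,
            Submodule.coe_smul, LinearMap.id_apply, LinearMap.codRestrict_apply,
            Submodule.subtype_apply, LinearMap.toSpanSingleton_apply]
          exact key
        · rw [dif_neg h]
          rw [if_neg h] at key
          simp only [LinearMap.add_apply, LinearMap.sub_apply, LinearMap.comp_apply, map_add,
            map_sub, Submodule.coe_add, Submodule.coe_sub, LinearEquiv.coe_coe,
            LinearEquiv.symm_apply_apply, LinearMap.smul_apply, map_smul,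
            Submodule.coe_smul, LinearMap.id_apply, LinearMap.codRestrict_apply,
            Submodule.subtype_apply, LinearMap.zero_apply, map_zero, Submodule.coe_zero]
          exact key }
  refine ⟨S, fun Q => ?_⟩
  have eX : ∀ i w, ((φ i).symm (S.X i w) : E) = R.A (i + 1) ((φ (i + 1)).symm w) := by
    intro i w; simp [S]; rfl
  have eY : ∀ i w, ((φ (i + 1)).symm (S.Y i w) : E) = R.Y i ((φ i).symm w) := by
    intro i w; simp [S]; rfl
  have ex : ∀ z, ((φ 0).symm (S.x z) : E) = z • R.x := by
    intro w; simp [S]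
  have ey : ∀ w, S.y w = R.y ((φ 0).symm w) := by
    intro w; simp [S]
  let ψ : ∀ i, (Fin (d i) → ℂ) →ₗ[ℂ] E := fun i => (R.V i).subtype ∘ₗ (φ i).symm.toLinearMap
  have hψ : ∀ i, Function.Injective (ψ i) := fun i =>
    (Submodule.subtype_injective _).comp (φ i).symm.injective
  have hψr : ∀ i, Submodule.map (ψ i) ⊤ = R.V i := by
    intro i
    rw [Submodule.map_top, LinearMap.range_comp, LinearEquiv.range, Submodule.map_top,
      Submodule.range_subtype]
  have hs : R.Sub (fun i => (Q.U i).map (ψ i)) Q.Uinf := by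
    refine ⟨fun i => ?_, ?_, ?_, ?_, ?_⟩
    · rw [← hψr]; exact Submodule.map_mono le_top
    · intro i v hv
      obtain ⟨k, rfl⟩ : ∃ k, i = k + 1 := ⟨i - 1, by simp⟩
      rw [add_sub_cancel_right]
      obtain ⟨w, hw, rfl⟩ := hv
      exact ⟨S.X k w, Q.hX k w hw, eX k w⟩
    · rintro i _ ⟨w, hw, rfl⟩
      exact ⟨S.Y i w, Q.hY i w hw, eY i w⟩
    · intro z hz
      exact ⟨S.x z, Q.hx z hz, ex z⟩
    · rintro _ ⟨w, hw, rfl⟩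
      have := Q.hy w hw
      rwa [ey] at this
  rcases hR _ _ hs with ⟨h1, h2⟩ | ⟨h1, h2⟩
  · left
    refine ⟨fun i => ?_, h2⟩
    apply Submodule.map_injective_of_injective (hψ i)
    simpa using h1 i
  · right
    refine ⟨fun i => ?_, h2⟩
    apply Submodule.map_injective_of_injective (hψ i)
    rw [hψr]; exact h1 i

lemma GSet_of_mem_Eset [NeZero ℓ] (h : d ∈ Eset ℓ θ) : GSet ℓ θ d := by
  classical
  obtain ⟨R, hR⟩ := h
  let ι : ∀ i, (Fin (d i) → ℂ) →ₗ[ℂ] (∀ i, Fin (d i) → ℂ) :=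
    fun i => LinearMap.single ℂ (fun i => Fin (d i) → ℂ) i
  let π : ∀ i, (∀ i, Fin (d i) → ℂ) →ₗ[ℂ] (Fin (d i) → ℂ) := fun i => LinearMap.proj i
  have hπι : ∀ i v, π i (ι i v) = v := fun i v => by simp [π, ι]
  have hι : ∀ i, Function.Injective (ι i) := fun i => Function.LeftInverse.injective (hπι i)
  let A : ZMod ℓ → (∀ i, Fin (d i) → ℂ) →ₗ[ℂ] (∀ i, Fin (d i) → ℂ) := fun m =>
    ι (m - 1) ∘ₗ R.X (m - 1) ∘ₗ π (m - 1 + 1)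
  have hA : ∀ k, A (k + 1) = ι k ∘ₗ R.X k ∘ₗ π (k + 1) := by
    intro k
    have : ∀ m, m = k → ι m ∘ₗ R.X m ∘ₗ π (m + 1) = ι k ∘ₗ R.X k ∘ₗ π (k + 1) := by
      intro m h; subst h; rfl
    exact this _ (add_sub_cancel_right k 1)
  let S : GRep ℓ θ (∀ i, Fin (d i) → ℂ) :=
    { V := fun i => LinearMap.range (ι i)
      A := A
      Y := fun i => ι (i + 1) ∘ₗ R.Y i ∘ₗ π i
      x := ι 0 (R.x 1)
      y := R.y ∘ₗ π 0
      hA := fun i v _ => ⟨_, rfl⟩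
      hY := fun i v _ => ⟨_, rfl⟩
      hx := ⟨_, rfl⟩
      rel := by
        rintro i _ ⟨w, rfl⟩
        obtain ⟨k, rfl⟩ : ∃ k, i = k + 1 := ⟨i - 1, by simp⟩
        rw [add_sub_cancel_right, hA, hA]
        simp only [LinearMap.comp_apply, hπι]
        have key := LinearMap.congr_fun (R.rel k) w
        have key2 := congrArg (ι (k + 1)) key
        by_cases h : k + 1 = 0
        · rw [dif_pos h] at key2
          rw [if_pos h]
          simp only [LinearMap.add_apply, LinearMap.sub_apply, LinearMap.comp_apply, map_add,
            map_sub, LinearMap.smul_apply, map_smul, LinearMap.id_apply] at key2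
          rw [← key2]
          congr 1
          have e1 : ∀ m (h : m = (0 : ZMod ℓ)) (w : Fin (d m) → ℂ), R.y (π 0 (ι m w)) • ι 0 (R.x 1)
              = ι m (castMap d h.symm (R.x (R.y (castMap d h w)))) := by
            intro m h w
            subst h
            rw [hπι]
            change _ = ι 0 (R.x (R.y w))
            rw [← map_smul, ← map_smul, smul_eq_mul, mul_one]
          exact e1 _ h w
        · rw [dif_neg h] at key2
          rw [if_neg h]
          simpa only [LinearMap.add_apply, LinearMap.sub_apply, LinearMap.comp_apply, map_add,
            map_sub, LinearMap.smul_apply, map_smul, LinearMap.id_apply, LinearMap.zero_apply,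
            map_zero] using key2 }
  refine ⟨_, _, _, inferInstance, S, ?_, ?_⟩
  · intro U T hU
    let Q : FSubrep R :=
      { U := fun i => (U i).comap (ι i)
        Uinf := T
        hX := by
          intro i v hv
          have := hU.hA _ _ hv
          change A (i + 1) _ ∈ _ at this
          rw [hA, add_sub_cancel_right] at this
          simpa only [LinearMap.comp_apply, hπι, Submodule.mem_comap] using this
        hY := by
          intro i v hv
          have := hU.hY _ _ hv
          change (ι (i + 1) ∘ₗ R.Y i ∘ₗ π i) _ ∈ _ at this
          simpa only [LinearMap.comp_apply, hπι, Submodule.mem_comap] using this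
        hx := by
          intro z hz
          have := hU.hx _ hz
          change z • ι 0 (R.x 1) ∈ _ at this
          rw [← map_smul, ← map_smul, smul_eq_mul, mul_one] at this
          exact this
        hy := by
          intro v hv
          have := hU.hy _ hv
          change (R.y ∘ₗ π 0) _ ∈ _ at this
          simpa only [LinearMap.comp_apply, hπι] using this }
    have hm : ∀ i, (Q.U i).map (ι i) = U i := by
      intro i
      change Submodule.map (ι i) ((U i).comap (ι i)) = _
      rw [Submodule.map_comap_eq]
      exact inf_eq_right.mpr (hU.le i)
    rcases hR Q with ⟨h1, h2⟩ | ⟨h1, h2⟩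
    · left
      refine ⟨fun i => ?_, h2⟩
      rw [← hm, h1, Submodule.map_bot]
    · right
      refine ⟨fun i => ?_, h2⟩
      rw [← hm, h1, Submodule.map_top]
  · intro i
    change Module.finrank ℂ (LinearMap.range (ι i)) = d i
    rw [LinearMap.finrank_range_of_inj (hι i)]
    simp

end conv

/-! ### The Calogero-Moser representation of dimension `n δ` -/

section CMrep

lemma exists_c (ℓ : ℕ) [NeZero ℓ] (θ : ZMod ℓ → ℂ) :
    ∃ c : ZMod ℓ → ℂ, c (-1) = 0 ∧ (∀ i, i ≠ 0 → c (i - 1) - c i = θ i) ∧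
      c 0 + θ 0 = ∑ i, θ i := by
  classical
  refine ⟨fun i => ∑ k with i.val < k.val, θ k, ?_, ?_, ?_⟩
  · apply Finset.sum_eq_zero
    intro k hk
    exfalso
    have h1 : (-1 : ZMod ℓ).val + 1 = ℓ := by
      obtain ⟨m, rfl⟩ := Nat.exists_eq_succ_of_ne_zero (NeZero.ne ℓ)
      rw [ZMod.val_neg_one]
    have h2 := ZMod.val_lt k
    simp at hk
    omega
  · intro i hi
    have h1 : (i - 1).val + 1 = i.val := by
      have h0 : i.val ≠ 0 := by simpa [ZMod.val_eq_zero] using hi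
      have hlt := ZMod.val_lt i
      have : i - 1 = ((i.val - 1 : ℕ) : ZMod ℓ) := by
        rw [Nat.cast_sub (by omega)]; simp
      rw [this, ZMod.val_cast_of_lt (by omega)]
      omega
    have h2 : (Finset.univ.filter fun k : ZMod ℓ => (i - 1).val < k.val) =
        insert i (Finset.univ.filter fun k : ZMod ℓ => i.val < k.val) := by
      ext k
      simp only [Finset.mem_filter, Finset.mem_univ, true_and, Finset.mem_insert]
      constructor
      · intro h
        rcases Nat.lt_or_ge i.val k.val with h3 | h3
        · exact Or.inr h3
        · left; exact ZMod.val_injective ℓ (by omega)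
      · rintro (rfl | h) <;> omega
    simp only [h2]
    rw [Finset.sum_insert (by simp)]
    ring
  · have h2 : (Finset.univ.filter fun k : ZMod ℓ => (0 : ZMod ℓ).val < k.val) =
        Finset.univ.erase 0 := by
      ext k
      simp [Nat.pos_iff_ne_zero, ZMod.val_eq_zero]
    simp only [h2]
    exact Finset.sum_erase_add _ _ (Finset.mem_univ _)

lemma poly_inv {n : ℕ} (lam : Fin n → ℂ) (U : Submodule ℂ (Fin n → ℂ))
    (hU : ∀ v ∈ U, (fun a => lam a * v a) ∈ U) (p : Polynomial ℂ) :
    ∀ v ∈ U, (fun a => p.eval (lam a) * v a) ∈ U := by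
  induction p using Polynomial.induction_on' with
  | add p q hp hq =>
    intro v hv
    have := U.add_mem (hp v hv) (hq v hv)
    convert this using 1
    funext a
    simp [add_mul]
  | monomial k c =>
    intro v hv
    simp only [Polynomial.eval_monomial]
    have : (fun a => lam a ^ k * v a) ∈ U := by
      induction k with
      | zero => simpa using hv
      | succ k ih =>
        have := hU _ ih
        convert this using 1
        funext a
        ring
    have := U.smul_mem c this
    convert this using 1
    funext a
    simp [mul_assoc]

lemma GSet_ndelta (ℓ : ℕ) [NeZero ℓ] (hℓ : 2 ≤ ℓ) (θ : ZMod ℓ → ℂ)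
    (ha : ∑ i : ZMod ℓ, θ i ≠ 0) (n : ℕ) : GSet ℓ θ (fun _ => n) := by
  classical
  obtain ⟨c, hc1, hc2, hc3⟩ := exists_c ℓ θ
  set σ := ∑ i, θ i with hσ
  let lam : Fin n → ℂ := fun a => (a.val : ℂ) + 1
  have hlam0 : ∀ a, lam a ≠ 0 := fun a => Nat.cast_add_one_ne_zero a.val
  have hlam : Function.Injective lam := by
    intro a b hab
    simp only [lam, add_left_inj, Nat.cast_inj] at hab
    exact Fin.ext hab
  let L : (Fin n → ℂ) →ₗ[ℂ] (Fin n → ℂ) := (Matrix.diagonal lam).mulVecLin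
  have hL : ∀ v, L v = fun a => lam a * v a := by
    intro v; funext a; simp [L, Matrix.mulVec_diagonal]
  let z : Matrix (Fin n) (Fin n) ℂ := fun a b => if a = b then 0 else - σ / (lam a - lam b)
  let Z : (Fin n → ℂ) →ₗ[ℂ] (Fin n → ℂ) := z.mulVecLin
  have hZ : ∀ v a, Z v a = ∑ b, z a b * v b := by
    intro v a; simp [Z, Matrix.mulVec, dotProduct]
  let y : (Fin n → ℂ) →ₗ[ℂ] ℂ := σ • ∑ b, LinearMap.proj b
  have hy : ∀ v, y v = σ * ∑ b, v b := by intro v; simp [y]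
  have hcomm : ∀ v, L (Z v) - Z (L v) + y v • (fun _ => (1 : ℂ)) = σ • v := by
    intro v
    funext a
    simp only [Pi.add_apply, Pi.sub_apply, Pi.smul_apply, hL, hZ, hy, smul_eq_mul, mul_one,
      Finset.mul_sum, ← Finset.sum_sub_distrib, ← Finset.sum_add_distrib]
    rw [Finset.sum_eq_single a]
    · simp [z]
    · intro b _ hb
      have hne : lam a - lam b ≠ 0 := sub_ne_zero.mpr (fun h => hb (hlam h).symm)
      simp only [z, if_neg (Ne.symm hb)]
      field_simp
      ring
    · simp
  let A : ZMod ℓ → (Fin n → ℂ) →ₗ[ℂ] (Fin n → ℂ) := fun i => if i = 0 then L else LinearMap.id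
  let Y : ZMod ℓ → (Fin n → ℂ) →ₗ[ℂ] (Fin n → ℂ) := fun i =>
    if i + 1 = 0 then Z else L ∘ₗ Z - c i • LinearMap.id
  have hAY : ∀ i v, A (i + 1) (Y i v) = L (Z v) - c i • v := by
    intro i v
    by_cases h : i + 1 = 0
    · have : i = -1 := eq_neg_of_add_eq_zero_left h
      simp [A, Y, h, this, hc1]
    · simp [A, Y, h]
  let R : GRep ℓ θ (Fin n → ℂ) :=
    { V := fun _ => ⊤
      A := A
      Y := Y
      x := fun _ => 1
      y := y
      hA := by simp
      hY := by simp
      hx := by simp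
      rel := by
        intro i v _
        rw [hAY]
        by_cases h : i = 0
        · subst h
          have h1 : Y (0 - 1) (A 0 v) = Z (L v) := by simp [A, Y]
          rw [h1, if_pos rfl]
          have h2 := hcomm v
          have h3 : θ 0 = σ - c 0 := by rw [← hc3]; ring
          rw [h3, sub_smul, ← h2]
          abel
        · have h1 : Y (i - 1) (A i v) = L (Z v) - c (i - 1) • v := by simp [A, Y, h]
          rw [h1, if_neg h, ← hc2 i h, sub_smul]
          abel }
  refine ⟨_, _, _, inferInstance, R, ?_, ?_⟩
  · intro U T hU
    have step : ∀ i, i ≠ 0 → U i ≤ U (i - 1) := by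
      intro i hi v hv
      have := hU.hA i v hv
      change A i v ∈ _ at this
      simpa [A, hi] using this
    have stepL : ∀ v ∈ U 0, (fun a => lam a * v a) ∈ U (-1) := by
      intro v hv
      have := hU.hA 0 v hv
      change A 0 v ∈ _ at this
      simpa [A, hL] using this
    have up : ∀ i, U i ≤ U 0 := by
      have : ∀ m : ℕ, m < ℓ → U (m : ZMod ℓ) ≤ U 0 := by
        intro m
        induction m with
        | zero => intro _; simp
        | succ m ih =>
          intro hm
          refine le_trans ?_ (ih (by omega))
          have h0 : ((m + 1 : ℕ) : ZMod ℓ) ≠ 0 := by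
            rw [Ne, ZMod.natCast_eq_zero_iff]
            exact Nat.not_dvd_of_pos_of_lt (by omega) hm
          have := step _ h0
          simpa using this
      intro i
      have := this i.val (ZMod.val_lt i)
      simpa using this
    have low : ∀ i, U (-1) ≤ U i := by
      have : ∀ m : ℕ, m < ℓ → U (-1) ≤ U (-1 - (m : ZMod ℓ)) := by
        intro m
        induction m with
        | zero => intro _; simp
        | succ m ih =>
          intro hm
          refine le_trans (ih (by omega)) ?_
          have h0 : ((m + 1 : ℕ) : ZMod ℓ) ≠ 0 := by
            rw [Ne, ZMod.natCast_eq_zero_iff]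
            exact Nat.not_dvd_of_pos_of_lt (by omega) hm
          have h1 : -1 - (m : ZMod ℓ) ≠ 0 := by
            intro h; apply h0; push_cast; linear_combination -h
          have := step _ h1
          have e : -1 - (m : ZMod ℓ) - 1 = -1 - ((m + 1 : ℕ) : ZMod ℓ) := by push_cast; ring
          rwa [e] at this
      intro i
      have := this (-1 - i).val (ZMod.val_lt _)
      simpa using this
    have inv := poly_inv lam (U 0) (fun v hv => low 0 (stepL v hv))
    have comp : ∀ v ∈ U 0, ∀ a, Pi.single a (v a) ∈ U 0 := by
      intro v hv a
      have := inv (Lagrange.basis Finset.univ lam a) v hv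
      convert this using 1
      funext b
      by_cases h : b = a
      · subst h
        rw [Lagrange.eval_basis_self hlam.injOn (Finset.mem_univ _)]
        simp
      · rw [Lagrange.eval_basis_of_ne (Ne.symm h) (Finset.mem_univ _)]
        simp [h]
    rcases eq_bot_or_eq_top T with hT | hT
    · left
      have h0 : U 0 = ⊥ := by
        rw [eq_bot_iff]
        intro v hv
        rw [Submodule.mem_bot]
        funext a
        have := hU.hy _ (comp v hv a)
        rw [hT, Submodule.mem_bot] at this
        change y _ = 0 at this
        rw [hy] at this
        simpa [ha] using this
      exact ⟨fun i => le_bot_iff.mp (h0 ▸ up i), hT⟩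
    · right
      refine ⟨fun i => ?_, hT⟩
      change U i = ⊤
      rw [eq_top_iff]
      refine le_trans ?_ (low i)
      have hx1 : (fun _ => (1 : ℂ)) ∈ U 0 := by
        have := hU.hx 1 (by rw [hT]; trivial)
        rwa [one_smul] at this
      have hall : ∀ v, v ∈ U 0 := by
        intro v
        have hv : v = ∑ a, v a • (Pi.single a (1 : ℂ) : Fin n → ℂ) := by
          funext b; simp [Finset.sum_apply, Pi.single_apply]
        rw [hv]
        exact Submodule.sum_mem _ fun a _ => Submodule.smul_mem _ _ (comp _ hx1 a)
      intro v _
      have := stepL (fun a => (lam a)⁻¹ * v a) (hall _)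
      convert this using 1
      funext a
      have := hlam0 a
      field_simp
  · intro i
    change Module.finrank ℂ (⊤ : Submodule ℂ (Fin n → ℂ)) = n
    simp

end CMrep

/-! ### Reflection -/

lemma finrank_sub_prod {E F : Type} [AddCommGroup E] [Module ℂ E] [AddCommGroup F] [Module ℂ F]
    [FiniteDimensional ℂ E] [FiniteDimensional ℂ F] (p : Submodule ℂ E) (q : Submodule ℂ F) :
    Module.finrank ℂ (p.prod q) = Module.finrank ℂ p + Module.finrank ℂ q := by
  have h : LinearMap.range (p.subtype.prodMap q.subtype) = p.prod q := by
    rw [LinearMap.range_prodMap, Submodule.range_subtype, Submodule.range_subtype]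
  rw [← h, LinearMap.finrank_range_of_inj, Module.finrank_prod]
  exact Function.Injective.prodMap (Submodule.subtype_injective _) (Submodule.subtype_injective _)

namespace GRep
variable {ℓ : ℕ} {θ : ZMod ℓ → ℂ} {E : Type} [AddCommGroup E] [Module ℂ E] (R : GRep ℓ θ E)
  (j : ZMod ℓ)

lemma sub_top : R.Sub R.V ⊤ where
  le _ := le_rfl
  hA := R.hA
  hY := R.hY
  hx _ _ := Submodule.smul_mem _ _ R.hx
  hy _ _ := trivial

def eps : ℂ := if j = 0 then 1 else 0

def inn : (E × E × ℂ) →ₗ[ℂ] E :=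
  (R.A (j + 1)).coprod ((-R.Y (j - 1)).coprod (LinearMap.toSpanSingleton ℂ E (eps j • R.x)))

lemma inn_apply (a b : E) (c : ℂ) :
    R.inn j (a, b, c) = R.A (j + 1) a - R.Y (j - 1) b + c • eps j • R.x := by
  simp [inn]; abel

def out : E →ₗ[ℂ] (E × E × ℂ) := (R.Y j).prod ((R.A j).prod (eps j • R.y))

lemma out_apply (v : E) : R.out j v = (R.Y j v, R.A j v, eps j * R.y v) := by
  simp [out]

/-- The sum of the neighbours. -/
def nb (U : ZMod ℓ → Submodule ℂ E) (T : Submodule ℂ ℂ) : Submodule ℂ (E × E × ℂ) :=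
  (U (j + 1)).prod ((U (j - 1)).prod (if j = 0 then T else ⊥))

variable {R} {U : ZMod ℓ → Submodule ℂ E} {T : Submodule ℂ ℂ}

lemma Sub.inn_mem (h : R.Sub U T) {w : E × E × ℂ} (hw : w ∈ nb j U T) : R.inn j w ∈ U j := by
  obtain ⟨a, b, c⟩ := w
  obtain ⟨h1, h2, h3⟩ := hw
  rw [inn_apply]
  have e1 := h.hA _ _ h1
  have e2 := h.hY _ _ h2
  rw [add_sub_cancel_right] at e1
  rw [sub_add_cancel] at e2
  refine add_mem (sub_mem e1 e2) ?_
  by_cases hj : j = 0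
  · subst hj
    simp only [if_true] at h3
    simpa [eps] using h.hx _ h3
  · simp [eps, hj]

lemma Sub.out_mem (h : R.Sub U T) {v : E} (hv : v ∈ U j) : R.out j v ∈ nb j U T := by
  rw [out_apply]
  refine ⟨h.hY _ _ hv, h.hA _ _ hv, ?_⟩
  by_cases hj : j = 0
  · subst hj
    simpa [eps] using h.hy _ hv
  · simp [eps, hj]

variable (R)

lemma inn_out {v : E} (hv : v ∈ R.V j) : R.inn j (R.out j v) = θ j • v := by
  rw [out_apply, inn_apply, ← R.rel j v hv]
  by_cases hj : j = 0
  · simp [eps, hj]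
  · simp [eps, hj]

/-- The new space at `j`. -/
def newK : Submodule ℂ (E × E × ℂ) := nb j R.V ⊤ ⊓ LinearMap.ker (R.inn j)

lemma finrank_newK [FiniteDimensional ℂ E] (hs : (nb j R.V ⊤).map (R.inn j) = R.V j) :
    Module.finrank ℂ (R.V j) + Module.finrank ℂ (R.newK j) =
      Module.finrank ℂ (R.V (j + 1)) + Module.finrank ℂ (R.V (j - 1)) +
        (if j = 0 then 1 else 0) := by
  have hW : Module.finrank ℂ (nb j R.V ⊤) = Module.finrank ℂ (R.V (j + 1)) +
      Module.finrank ℂ (R.V (j - 1)) + (if j = 0 then 1 else 0) := by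
    unfold nb
    rw [finrank_sub_prod, finrank_sub_prod, add_assoc]
    by_cases h : j = 0
    · rw [if_pos h, if_pos h]; simp
    · rw [if_neg h, if_neg h]; simp
  rw [← hW, ← LinearMap.finrank_range_add_finrank_ker ((R.inn j).domRestrict (nb j R.V ⊤)),
    LinearMap.range_domRestrict, hs, LinearMap.ker_domRestrict]
  congr 1
  unfold newK
  rw [← Submodule.map_comap_subtype]
  exact (LinearEquiv.finrank_eq (Submodule.equivMapOfInjective _
    (Submodule.subtype_injective _) _)).symm

def inn' : (E × E × ℂ) →ₗ[ℂ] (E × E × ℂ) := R.out j ∘ₗ R.inn j - θ j • LinearMap.id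

lemma inn'_apply (w : E × E × ℂ) : R.inn' j w = R.out j (R.inn j w) - θ j • w := by
  simp [inn']

lemma inn'_mem {w : E × E × ℂ} (hw : w ∈ nb j R.V ⊤) : R.inn' j w ∈ R.newK j := by
  have h1 := R.sub_top.inn_mem j hw
  refine ⟨?_, ?_⟩
  · rw [inn'_apply]
    exact sub_mem (R.sub_top.out_mem j h1) (Submodule.smul_mem _ _ hw)
  · change R.inn j _ = 0
    rw [inn'_apply, map_sub, R.inn_out j h1, map_smul, sub_self]

lemma inn'_K {w : E × E × ℂ} (hw : w ∈ R.newK j) : R.inn' j w = - θ j • w := by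
  rw [inn'_apply, hw.2]; simp

def newV (i : ZMod ℓ) : Submodule ℂ (E × E × E × ℂ) :=
  if i = j then (⊥ : Submodule ℂ E).prod (R.newK j) else (R.V i).prod ⊥

def newA (i : ZMod ℓ) : (E × E × E × ℂ) →ₗ[ℂ] (E × E × E × ℂ) :=
  if i = j then
    LinearMap.inl ℂ _ _ ∘ₗ LinearMap.fst ℂ _ _ ∘ₗ LinearMap.snd ℂ _ _ ∘ₗ LinearMap.snd ℂ _ _
  else if i = j + 1 then
    LinearMap.inr ℂ _ _ ∘ₗ R.inn' j ∘ₗ LinearMap.inl ℂ _ _ ∘ₗ LinearMap.fst ℂ _ _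
  else LinearMap.inl ℂ _ _ ∘ₗ R.A i ∘ₗ LinearMap.fst ℂ _ _

def newY (i : ZMod ℓ) : (E × E × E × ℂ) →ₗ[ℂ] (E × E × E × ℂ) :=
  if i = j then
    LinearMap.inl ℂ _ _ ∘ₗ LinearMap.fst ℂ _ _ ∘ₗ LinearMap.snd ℂ _ _
  else if i = j - 1 then
    - (LinearMap.inr ℂ _ _ ∘ₗ R.inn' j ∘ₗ LinearMap.inr ℂ _ _ ∘ₗ LinearMap.inl ℂ _ _ ∘ₗ
      LinearMap.fst ℂ _ _)
  else LinearMap.inl ℂ _ _ ∘ₗ R.Y i ∘ₗ LinearMap.fst ℂ _ _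

def newx : E × E × E × ℂ := if j = 0 then (0, R.inn' j (0, 0, 1)) else (R.x, 0)

def newy : (E × E × E × ℂ) →ₗ[ℂ] ℂ :=
  if j = 0 then LinearMap.snd ℂ _ _ ∘ₗ LinearMap.snd ℂ _ _ ∘ₗ LinearMap.snd ℂ _ _
  else R.y ∘ₗ LinearMap.fst ℂ _ _

lemma ne_succ (hℓ : 2 ≤ ℓ) : j + 1 ≠ j := by simpa using one_ne hℓ
lemma ne_pred (hℓ : 2 ≤ ℓ) : j - 1 ≠ j := by simpa using one_ne hℓ

lemma newV_self : R.newV j j = (⊥ : Submodule ℂ E).prod (R.newK j) := if_pos rfl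
lemma newV_ne {i : ZMod ℓ} (h : i ≠ j) : R.newV j i = (R.V i).prod ⊥ := if_neg h

lemma newA_self (p : E) (w : E × E × ℂ) : R.newA j j (p, w) = (w.2.1, 0) := by
  simp [newA]
lemma newA_succ (hℓ : 2 ≤ ℓ) (p : E) (w : E × E × ℂ) :
    R.newA j (j + 1) (p, w) = (0, R.inn' j (p, 0, 0)) := by
  simp [newA, one_ne hℓ]
  rfl
lemma newA_ne {i : ZMod ℓ} (h : i ≠ j) (h' : i ≠ j + 1) (p : E) (w : E × E × ℂ) :
    R.newA j i (p, w) = (R.A i p, 0) := by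
  simp [newA, h, h']

lemma newY_self (p : E) (w : E × E × ℂ) : R.newY j j (p, w) = (w.1, 0) := by
  simp [newY]
lemma newY_pred (hℓ : 2 ≤ ℓ) (p : E) (w : E × E × ℂ) :
    R.newY j (j - 1) (p, w) = (0, - R.inn' j (0, p, 0)) := by
  simp [newY, one_ne hℓ]
lemma newY_ne {i : ZMod ℓ} (h : i ≠ j) (h' : i ≠ j - 1) (p : E) (w : E × E × ℂ) :
    R.newY j i (p, w) = (R.Y i p, 0) := by
  simp [newY, h, h']

lemma newAY (hℓ : 2 ≤ ℓ) {i : ZMod ℓ} (h : i ≠ j) (v : E) :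
    R.newA j (i + 1) (R.newY j i (v, 0)) =
      (R.A (i + 1) (R.Y i v) + ((if i = j - 1 then 1 else 0 : ℂ) * θ j) • v, 0) := by
  by_cases h1 : i = j - 1
  · subst h1
    rw [R.newY_pred j hℓ, sub_add_cancel, newA_self, inn'_apply, inn_apply, out_apply]
    simp [add_comm]
  · rw [R.newY_ne j h h1, R.newA_ne j (fun h2 => h1 (by rw [← h2]; simp)) (by simpa using h)]
    simp [h1]

lemma newYA (hℓ : 2 ≤ ℓ) {i : ZMod ℓ} (h : i ≠ j) (v : E) :
    R.newY j (i - 1) (R.newA j i (v, 0)) =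
      (R.Y (i - 1) (R.A i v) - ((if i = j + 1 then 1 else 0 : ℂ) * θ j) • v, 0) := by
  by_cases h1 : i = j + 1
  · subst h1
    rw [R.newA_succ j hℓ, add_sub_cancel_right, newY_self, inn'_apply, inn_apply, out_apply]
    simp
  · rw [R.newA_ne j h h1, R.newY_ne j (fun h2 => h1 (by rw [← h2]; simp)) (by simpa using h)]
    simp [h1]

lemma mem_newV_ne {i : ZMod ℓ} (h : i ≠ j) {p : E × E × E × ℂ} :
    p ∈ R.newV j i ↔ p.1 ∈ R.V i ∧ p.2 = 0 := by
  rw [newV_ne _ _ h, Submodule.mem_prod, Submodule.mem_bot]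

lemma mem_newV_self {p : E × E × E × ℂ} :
    p ∈ R.newV j j ↔ p.1 = 0 ∧ p.2 ∈ R.newK j := by
  rw [newV_self, Submodule.mem_prod, Submodule.mem_bot]

def reflect (hℓ : 2 ≤ ℓ) : GRep ℓ (sC ℓ j θ) (E × E × E × ℂ) where
  V := R.newV j
  A := R.newA j
  Y := R.newY j
  x := R.newx j
  y := R.newy j
  hA := by
    rintro i ⟨v, w⟩ hv
    by_cases h : i = j
    · subst h
      rw [mem_newV_self] at hv
      rw [newA_self, mem_newV_ne _ _ (ne_pred i hℓ)]
      exact ⟨hv.2.1.2.1, rfl⟩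
    · rw [R.mem_newV_ne j h] at hv
      by_cases h1 : i = j + 1
      · subst h1
        rw [R.newA_succ j hℓ, add_sub_cancel_right, mem_newV_self]
        exact ⟨rfl, R.inn'_mem j ⟨hv.1, zero_mem _, zero_mem _⟩⟩
      · rw [R.newA_ne j h h1, mem_newV_ne _ _ (fun h2 => h1 (by rw [← h2]; simp))]
        exact ⟨R.hA _ _ hv.1, rfl⟩
  hY := by
    rintro i ⟨v, w⟩ hv
    by_cases h : i = j
    · subst h
      rw [mem_newV_self] at hv
      rw [newY_self, mem_newV_ne _ _ (ne_succ i hℓ)]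
      exact ⟨hv.2.1.1, rfl⟩
    · rw [R.mem_newV_ne j h] at hv
      by_cases h1 : i = j - 1
      · subst h1
        rw [R.newY_pred j hℓ, sub_add_cancel, mem_newV_self]
        exact ⟨rfl, neg_mem (R.inn'_mem j ⟨zero_mem _, hv.1, zero_mem _⟩)⟩
      · rw [R.newY_ne j h h1, mem_newV_ne _ _ (fun h2 => h1 (by rw [← h2]; simp))]
        exact ⟨R.hY _ _ hv.1, rfl⟩
  hx := by
    by_cases h : j = 0
    · subst h
      rw [mem_newV_self, newx, if_pos rfl]
      exact ⟨rfl, R.inn'_mem 0 ⟨zero_mem _, zero_mem _, by simp⟩⟩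
    · rw [mem_newV_ne _ _ (Ne.symm h), newx, if_neg h]
      exact ⟨R.hx, rfl⟩
  rel := by
    rintro i ⟨v, w⟩ hv
    by_cases h : i = j
    · subst h
      rw [mem_newV_self] at hv
      obtain ⟨h1, h2⟩ := hv
      obtain rfl : v = 0 := h1
      rw [newY_self, newA_self, R.newA_succ i hℓ, R.newY_pred i hℓ]
      have h3 := R.inn'_K i h2
      obtain ⟨a, b, c⟩ := w
      have hs : sC ℓ i θ i = - θ i := if_pos rfl
      rw [hs]
      have e0 : (a, b, c) = (a, 0, 0) + ((0, b, 0) + c • (0, 0, 1) : E × E × ℂ) := by simp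
      have e1 := R.inn' i |>.map_add (a, 0, 0) ((0, b, 0) + c • (0, 0, 1) : E × E × ℂ)
      rw [← e0, map_add, map_smul, h3] at e1
      by_cases hi : i = 0
      · rw [if_pos hi, newy, newx, if_pos hi, if_pos hi]
        apply Prod.ext
        · simp
        · simp only [Prod.snd_add, Prod.snd_sub, Prod.smul_snd, e1]
          simp
          abel
      · have hc : c = 0 := by
          have := h2.1.2.2
          simpa [hi] using this
        subst hc
        rw [if_neg hi]
        apply Prod.ext
        · simp
        · simp only [Prod.snd_add, Prod.snd_sub, Prod.smul_snd, e1]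
          simp
    · rw [R.mem_newV_ne j h] at hv
      obtain ⟨h1, h2⟩ := hv
      obtain rfl : w = 0 := h2
      rw [R.newAY j hℓ h, R.newYA j hℓ h]
      have hs : sC ℓ j θ i = θ i + ((if i = j - 1 then 1 else 0) +
        (if i = j + 1 then 1 else 0) : ℂ) * θ j := if_neg h
      rw [hs, add_smul, add_mul, add_smul]
      have key := R.rel i v h1
      by_cases hi : i = 0
      · have hj : j ≠ 0 := fun hj => h (hi.trans hj.symm)
        rw [if_pos hi] at key ⊢
        rw [newy, newx, if_neg hj, if_neg hj]
        apply Prod.ext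
        · simp only [Prod.fst_add, Prod.fst_sub, Prod.smul_fst, ← key]
          simp
          abel
        · split_ifs <;> simp
      · rw [if_neg hi] at key ⊢
        apply Prod.ext
        · simp only [Prod.fst_add, Prod.fst_sub, Prod.smul_fst, ← key]
          simp
          abel
        · split_ifs <;> simp

lemma map_nb_of_ne (hj : θ j ≠ 0) : (nb j R.V ⊤).map (R.inn j) = R.V j := by
  apply le_antisymm
  · rintro _ ⟨w, hw, rfl⟩
    exact R.sub_top.inn_mem j hw
  · intro v hv
    refine ⟨(θ j)⁻¹ • R.out j v, Submodule.smul_mem _ _ (R.sub_top.out_mem j hv), ?_⟩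
    rw [map_smul, R.inn_out j hv, smul_smul, inv_mul_cancel₀ hj, one_smul]

lemma reflect_simple (hℓ : 2 ≤ ℓ) (hj : θ j ≠ 0) (hR : R.Simple) : (R.reflect j hℓ).Simple := by
  intro U' T hU'
  let P : ZMod ℓ → Submodule ℂ E := fun i => (U' i).comap (LinearMap.inl ℂ _ _)
  have memP : ∀ i v, v ∈ P i ↔ (v, 0) ∈ U' i := fun i v => Iff.rfl
  have hout : ∀ w, (0, w) ∈ U' j → w ∈ nb j P T := by
    rintro ⟨a, b, c⟩ hw
    have h1 := hU'.hY j _ hw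
    have h2 := hU'.hA j _ hw
    change R.newY j j _ ∈ _ at h1
    change R.newA j j _ ∈ _ at h2
    rw [newY_self] at h1
    rw [newA_self] at h2
    refine ⟨h1, h2, ?_⟩
    by_cases h : j = 0
    · subst h
      have h3 := hU'.hy _ hw
      change R.newy 0 _ ∈ _ at h3
      simpa [newy] using h3
    · have := (R.mem_newV_self j).mp (hU'.le j hw)
      have := this.2.1.2.2
      simpa [h] using this
  have hin : ∀ w ∈ nb j P T, (0, R.inn' j w) ∈ U' j := by
    rintro ⟨a, b, c⟩ ⟨h1, h2, h3⟩
    have e1 := hU'.hA _ _ h1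
    have e2 := hU'.hY _ _ h2
    change R.newA j (j + 1) (a, 0) ∈ _ at e1
    change R.newY j (j - 1) (b, 0) ∈ _ at e2
    rw [R.newA_succ j hℓ, add_sub_cancel_right] at e1
    rw [R.newY_pred j hℓ, sub_add_cancel] at e2
    have e3 : (0, R.inn' j (0, 0, c)) ∈ U' j := by
      by_cases h : j = 0
      · subst h
        have := hU'.hx c (by simpa using h3)
        change c • R.newx 0 ∈ _ at this
        rw [newx, if_pos rfl] at this
        convert this using 1
        apply Prod.ext
        · simp
        · simp [← map_smul]
      · have : c = 0 := by simpa [h] using h3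
        subst this
        have e : ((0 : E), R.inn' j (0, 0, 0)) = 0 := by
          rw [show ((0, 0, 0) : E × E × ℂ) = 0 from rfl, map_zero]; rfl
        rw [e]; exact zero_mem _
    have e4 := add_mem (sub_mem e1 e2) e3
    convert e4 using 1
    apply Prod.ext
    · simp
    · simp [← map_add]
  let U : ZMod ℓ → Submodule ℂ E := fun i => if i = j then (nb j P T).map (R.inn j) else P i
  have Uj : U j = (nb j P T).map (R.inn j) := if_pos rfl
  have Une : ∀ i, i ≠ j → U i = P i := fun i h => if_neg h
  have hoi : ∀ w ∈ nb j P T, R.out j (R.inn j w) ∈ nb j P T := by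
    intro w hw
    have := hout _ (hin w hw)
    rw [inn'_apply] at this
    have := add_mem this (Submodule.smul_mem _ (θ j) hw)
    simpa using this
  have hPV : ∀ i, i ≠ j → P i ≤ R.V i := by
    intro i h v hv
    exact ((R.mem_newV_ne j h).mp (hU'.le i hv)).1
  have hnb : nb j P T ≤ nb j R.V ⊤ := by
    rintro ⟨a, b, c⟩ ⟨h1, h2, h3⟩
    refine ⟨hPV _ (ne_succ j hℓ) h1, hPV _ (ne_pred j hℓ) h2, ?_⟩
    by_cases h : j = 0
    · simp [h]
    · simpa [h] using h3
  have hs : R.Sub U T := by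
    refine ⟨?_, ?_, ?_, ?_, ?_⟩
    · intro i
      by_cases h : i = j
      · subst h
        rw [Uj, ← R.map_nb_of_ne i hj]
        exact Submodule.map_mono hnb
      · rw [Une i h]; exact hPV i h
    · intro i v hv
      by_cases h : i = j
      · subst h
        rw [Uj] at hv
        obtain ⟨w, hw, rfl⟩ := hv
        rw [Une _ (ne_pred i hℓ)]
        have := hoi w hw
        rw [out_apply] at this
        exact this.2.1
      · rw [Une i h] at hv
        by_cases h1 : i = j + 1
        · subst h1
          rw [add_sub_cancel_right, Uj]
          refine ⟨(v, 0, 0), ⟨hv, zero_mem _, zero_mem _⟩, ?_⟩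
          rw [inn_apply]; simp
        · have h2 : i - 1 ≠ j := fun h2 => h1 (by rw [← h2]; simp)
          rw [Une _ h2]
          have := hU'.hA _ _ hv
          change R.newA j i (v, 0) ∈ _ at this
          rwa [R.newA_ne j h h1] at this
    · intro i v hv
      by_cases h : i = j
      · subst h
        rw [Uj] at hv
        obtain ⟨w, hw, rfl⟩ := hv
        rw [Une _ (ne_succ i hℓ)]
        have := hoi w hw
        rw [out_apply] at this
        exact this.1
      · rw [Une i h] at hv
        by_cases h1 : i = j - 1
        · subst h1
          rw [sub_add_cancel, Uj]
          refine ⟨(0, -v, 0), ⟨zero_mem _, neg_mem hv, zero_mem _⟩, ?_⟩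
          rw [inn_apply]; simp
        · have h2 : i + 1 ≠ j := fun h2 => h1 (by rw [← h2]; simp)
          rw [Une _ h2]
          have := hU'.hY _ _ hv
          change R.newY j i (v, 0) ∈ _ at this
          rwa [R.newY_ne j h h1] at this
    · intro z hz
      by_cases h : j = 0
      · subst h
        rw [Uj]
        refine ⟨(0, 0, z), ⟨zero_mem _, zero_mem _, by simpa using hz⟩, ?_⟩
        rw [inn_apply]; simp [eps]
      · rw [Une _ (Ne.symm h)]
        have := hU'.hx z hz
        change z • R.newx j ∈ _ at this
        rw [newx, if_neg h] at this
        rw [memP]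
        simpa using this
    · intro v hv
      by_cases h : j = 0
      · subst h
        rw [Uj] at hv
        obtain ⟨w, hw, rfl⟩ := hv
        have := hoi w hw
        rw [out_apply] at this
        have := this.2.2
        simpa [eps] using this
      · rw [Une _ (Ne.symm h)] at hv
        have := hU'.hy _ hv
        change R.newy j _ ∈ _ at this
        rw [newy, if_neg h] at this
        simpa using this
  rcases hR U T hs with ⟨h1, h2⟩ | ⟨h1, h2⟩
  · left
    refine ⟨fun i => ?_, h2⟩
    rw [eq_bot_iff]
    rintro ⟨v, w⟩ hv
    by_cases h : i = j
    · subst h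
      have h3 := (R.mem_newV_self i).mp (hU'.le i hv)
      obtain rfl : v = 0 := h3.1
      have h4 := hout w hv
      obtain ⟨a, b, c⟩ := w
      obtain ⟨ha, hb, hc⟩ := h4
      rw [← Une _ (ne_succ i hℓ), h1] at ha
      rw [← Une _ (ne_pred i hℓ), h1] at hb
      rw [h2] at hc
      simp at ha hb hc
      simp [ha, hb, hc]
    · have h3 := (R.mem_newV_ne j h).mp (hU'.le i hv)
      obtain rfl : w = 0 := h3.2
      have : v ∈ P i := hv
      rw [← Une i h, h1] at this
      simp at this
      simp [this]
  · right
    refine ⟨fun i => le_antisymm (hU'.le i) ?_, h2⟩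
    change R.newV j i ≤ _
    rintro ⟨v, w⟩ hv
    by_cases h : i = j
    · subst h
      have h3 := (R.mem_newV_self i).mp hv
      obtain rfl : v = 0 := h3.1
      have h4 : w ∈ nb i P T := by
        have := h3.2.1
        unfold nb at this ⊢
        rw [h2, ← Une _ (ne_succ i hℓ), ← Une _ (ne_pred i hℓ), h1, h1]
        exact this
      have h5 := Submodule.smul_mem _ (-(θ i))⁻¹ (hin w h4)
      rw [R.inn'_K i h3.2] at h5
      simpa [smul_smul, hj] using h5
    · have h3 := (R.mem_newV_ne j h).mp hv
      obtain rfl : w = 0 := h3.2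
      rw [← memP, ← Une i h, h1]
      exact h3.1

lemma simple_ineq [FiniteDimensional ℂ E] (hℓ : 2 ≤ ℓ) (hj : θ j = 0) (hR : R.Simple) :
    2 * Module.finrank ℂ (R.V j) ≤ (if j = 0 then 1 else 0) + Module.finrank ℂ (R.V (j + 1)) +
      Module.finrank ℂ (R.V (j - 1)) := by
  have hsurj : (nb j R.V ⊤).map (R.inn j) = R.V j := by
    let U : ZMod ℓ → Submodule ℂ E := fun i =>
      if i = j then (nb j R.V ⊤).map (R.inn j) else R.V i
    have Uj : U j = (nb j R.V ⊤).map (R.inn j) := if_pos rfl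
    have Une : ∀ i, i ≠ j → U i = R.V i := fun i h => if_neg h
    have le : ∀ i, U i ≤ R.V i := by
      intro i
      by_cases h : i = j
      · subst h
        rw [Uj]
        rintro _ ⟨w, hw, rfl⟩
        exact R.sub_top.inn_mem i hw
      · rw [Une i h]
    have hs : R.Sub U ⊤ := by
      refine ⟨le, ?_, ?_, ?_, fun _ _ => trivial⟩
      · intro i v hv
        have hv' := le i hv
        by_cases h : i - 1 = j
        · obtain rfl : i = j + 1 := by rw [← h]; simp
          rw [add_sub_cancel_right, Uj]
          refine ⟨(v, 0, 0), ⟨hv', zero_mem _, zero_mem _⟩, ?_⟩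
          rw [inn_apply]; simp
        · rw [Une _ h]; exact R.hA _ _ hv'
      · intro i v hv
        have hv' := le i hv
        by_cases h : i + 1 = j
        · obtain rfl : i = j - 1 := by rw [← h]; simp
          rw [sub_add_cancel, Uj]
          refine ⟨(0, -v, 0), ⟨zero_mem _, neg_mem hv', zero_mem _⟩, ?_⟩
          rw [inn_apply]; simp
        · rw [Une _ h]; exact R.hY _ _ hv'
      · intro z _
        by_cases h : j = 0
        · subst h
          rw [Uj]
          refine ⟨(0, 0, z), ⟨zero_mem _, zero_mem _, by simp⟩, ?_⟩
          rw [inn_apply]; simp [eps]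
        · rw [Une _ (Ne.symm h)]
          exact Submodule.smul_mem _ _ R.hx
    rcases hR U ⊤ hs with ⟨_, h2⟩ | ⟨h1, _⟩
    · exact absurd h2 top_ne_bot
    · rw [← Uj, h1]
  have hinj : R.V j ⊓ LinearMap.ker (R.out j) = ⊥ := by
    let U : ZMod ℓ → Submodule ℂ E := fun i =>
      if i = j then R.V j ⊓ LinearMap.ker (R.out j) else ⊥
    have Uj : U j = R.V j ⊓ LinearMap.ker (R.out j) := if_pos rfl
    have Une : ∀ i, i ≠ j → U i = ⊥ := fun i h => if_neg h
    have hk : ∀ v ∈ U j, R.Y j v = 0 ∧ R.A j v = 0 ∧ eps j * R.y v = 0 := by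
      intro v hv
      rw [Uj] at hv
      have := hv.2
      change R.out j v = 0 at this
      rw [out_apply] at this
      simpa only [Prod.mk_eq_zero] using this
    have hs : R.Sub U ⊥ := by
      refine ⟨?_, ?_, ?_, ?_, ?_⟩
      · intro i
        by_cases h : i = j
        · subst h
          rw [Uj]; exact inf_le_left
        · rw [Une i h]; exact bot_le
      · intro i v hv
        by_cases h : i = j
        · subst h
          rw [(hk v hv).2.1]; exact zero_mem _
        · rw [Une i h, Submodule.mem_bot] at hv
          rw [hv, map_zero]; exact zero_mem _
      · intro i v hv
        by_cases h : i = j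
        · subst h
          rw [(hk v hv).1]; exact zero_mem _
        · rw [Une i h, Submodule.mem_bot] at hv
          rw [hv, map_zero]; exact zero_mem _
      · intro z hz
        rw [Submodule.mem_bot] at hz
        rw [hz, zero_smul]; exact zero_mem _
      · intro v hv
        by_cases h : j = 0
        · subst h
          simpa [eps] using (hk v hv).2.2
        · rw [Une _ (Ne.symm h), Submodule.mem_bot] at hv
          rw [hv, map_zero]; exact zero_mem _
    rcases hR U ⊥ hs with ⟨h1, _⟩ | ⟨_, h2⟩
    · rw [← Uj, h1]
    · exact absurd h2.symm top_ne_bot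
  have hle : Module.finrank ℂ (R.V j) ≤ Module.finrank ℂ (R.newK j) := by
    let f : R.V j →ₗ[ℂ] R.newK j := ((R.out j).domRestrict (R.V j)).codRestrict _ (by
      intro v
      refine ⟨R.sub_top.out_mem j v.2, ?_⟩
      change R.inn j (R.out j v) = 0
      have := R.inn_out j v.2
      rwa [hj, zero_smul] at this)
    refine LinearMap.finrank_le_finrank_of_injective (f := f) ?_
    rw [← LinearMap.ker_eq_bot, eq_bot_iff]
    intro v hv
    have h1 : R.out j v = 0 := congrArg Subtype.val (LinearMap.mem_ker.mp hv)
    have h2 : (v : E) ∈ R.V j ⊓ LinearMap.ker (R.out j) := ⟨v.2, h1⟩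
    rw [hinj, Submodule.mem_bot] at h2
    rw [Submodule.mem_bot]
    exact Subtype.ext h2
  have := R.finrank_newK j hsurj
  omega

end GRep

lemma GSet_reflect {ℓ : ℕ} (hℓ : 2 ≤ ℓ) {θ : ZMod ℓ → ℂ} {d : ZMod ℓ → ℕ} (j : ZMod ℓ)
    (hj : θ j ≠ 0) (h : GSet ℓ θ d) :
    ∃ d' : ZMod ℓ → ℕ, (fun i => (d' i : ℤ)) = sInt ℓ j (fun i => (d i : ℤ)) ∧
      GSet ℓ (sC ℓ j θ) d' := by
  obtain ⟨E, _, _, _, R, hR, hd⟩ := h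
  refine ⟨fun i => Module.finrank ℂ ((R.reflect j hℓ).V i), ?_,
    E × E × E × ℂ, _, _, inferInstance, R.reflect j hℓ, R.reflect_simple j hℓ hj hR, fun _ => rfl⟩
  funext i
  change (Module.finrank ℂ (R.newV j i) : ℤ) = _
  by_cases h : i = j
  · subst h
    have h1 := R.finrank_newK i (R.map_nb_of_ne i hj)
    have h2 : Module.finrank ℂ (R.newV i i) = Module.finrank ℂ (R.newK i) := by
      rw [R.newV_self, ← Submodule.map_inr]
      exact (LinearEquiv.finrank_eq (Submodule.equivMapOfInjective _
        LinearMap.inr_injective _)).symm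
    rw [hd, hd, hd] at h1
    rw [h2]
    simp only [sInt, if_true]
    split_ifs at h1 ⊢ <;> omega
  · have h2 : Module.finrank ℂ (R.newV j i) = Module.finrank ℂ (R.V i) := by
      rw [R.newV_ne j h, ← Submodule.map_inl]
      exact (LinearEquiv.finrank_eq (Submodule.equivMapOfInjective _
        LinearMap.inl_injective _)).symm
    rw [h2, hd]
    simp [sInt, h]

lemma GSet_descend {ℓ : ℕ} [NeZero ℓ] (hℓ : 2 ≤ ℓ) (N : ℕ) :
    ∀ (θ : ZMod ℓ → ℂ) (d : ZMod ℓ → ℕ), ∑ i, d i = N → GSet ℓ θ d →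
      ∃ (n : ℕ) (θ' : ZMod ℓ → ℂ),
        Relation.EqvGen (MoveRel ℓ) ((fun i => (d i : ℤ)), θ) ((fun _ => (n : ℤ)), θ') := by
  induction N using Nat.strong_induction_on with
  | _ N ih =>
    intro θ d hN hG
    by_cases hex : ∃ j, θ j ≠ 0 ∧ sInt ℓ j (fun i => (d i : ℤ)) j < d j
    · obtain ⟨j, hj, hlt⟩ := hex
      obtain ⟨d', hd', hG'⟩ := GSet_reflect hℓ j hj hG
      have hsum : ∑ i, d' i < ∑ i, d i := by
        apply Finset.sum_lt_sum
        · intro i _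
          by_cases h : i = j
          · subst h
            rw [← hd'] at hlt
            simp only at hlt
            exact_mod_cast hlt.le
          · have := congrFun hd' i
            simp only [sInt, if_neg h] at this
            omega
        · refine ⟨j, Finset.mem_univ _, ?_⟩
          rw [← hd'] at hlt
          simp only at hlt
          exact_mod_cast hlt
      obtain ⟨n, θ', hE⟩ := ih _ (hN ▸ hsum) _ d' rfl hG'
      refine ⟨n, θ', Relation.EqvGen.trans _ _ _ (Relation.EqvGen.rel _ _ ⟨j, hj, rfl⟩) ?_⟩
      rw [hd'] at hE
      exact hE
    · push Not at hex
      have hc := convex_const ℓ (fun i => (d i : ℤ)) (by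
        intro j
        by_cases hj : θ j = 0
        · obtain ⟨E, _, _, _, R, hR, hd⟩ := hG
          have := R.simple_ineq j hℓ hj hR
          rw [hd, hd, hd] at this
          split_ifs at this ⊢ <;> omega
        · have := hex j hj
          simp only [sInt, if_true] at this
          linarith)
      refine ⟨d 0, θ, ?_⟩
      have : (fun i => (d i : ℤ)) = fun _ => (d 0 : ℤ) := funext hc
      rw [this]
      exact Relation.EqvGen.refl _

/-- The invariant transported along the equivalence relation. -/
def Good (ℓ : ℕ) (p : (ZMod ℓ → ℤ) × (ZMod ℓ → ℂ)) : Prop :=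
  ∃ d : ZMod ℓ → ℕ, (fun i => (d i : ℤ)) = p.1 ∧ GSet ℓ p.2 d

lemma good_move {ℓ : ℕ} (hℓ : 2 ≤ ℓ) {p q} (h : MoveRel ℓ p q) : Good ℓ p ↔ Good ℓ q := by
  obtain ⟨j, hj, rfl⟩ := h
  obtain ⟨D, θ⟩ := p
  have fwd : ∀ (D : ZMod ℓ → ℤ) (θ : ZMod ℓ → ℂ), θ j ≠ 0 → Good ℓ (D, θ) →
      Good ℓ (sInt ℓ j D, sC ℓ j θ) := by
    rintro D θ hj ⟨d, hd, hG⟩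
    obtain ⟨d', hd', hG'⟩ := GSet_reflect hℓ j hj hG
    refine ⟨d', ?_, hG'⟩
    rw [hd', hd]
  refine ⟨fwd D θ hj, fun h => ?_⟩
  have h1 : sC ℓ j θ j ≠ 0 := by simpa [sC] using hj
  have := fwd _ _ h1 h
  rwa [sInt_sInt hℓ, sC_sC] at this

lemma good_eqv {ℓ : ℕ} [NeZero ℓ] (hℓ : 2 ≤ ℓ) {p q} (h : Relation.EqvGen (MoveRel ℓ) p q) :
    (Good ℓ p ↔ Good ℓ q) ∧ ∑ i, p.2 i = ∑ i, q.2 i := by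
  induction h with
  | rel p q h =>
    refine ⟨good_move hℓ h, ?_⟩
    obtain ⟨j, hj, rfl⟩ := h
    exact (sum_sC hℓ j p.2).symm
  | refl => exact ⟨Iff.rfl, rfl⟩
  | symm _ _ _ ih => exact ⟨ih.1.symm, ih.2.symm⟩
  | trans _ _ _ _ _ ih1 ih2 => exact ⟨ih1.1.trans ih2.1, ih1.2.trans ih2.2⟩

/-- For `∑ θ_i ≠ 0`: `d ∈ E_θ` iff the pair `(d, θ)` is equivalent
(under the smallest equivalence relation generated by the moves above) to a pair
`(n·δ_ℓ, θ')` with `n ≥ 0`. -/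
theorem mem_Eset_iff_equiv_ndelta (ℓ : ℕ) [NeZero ℓ] (hℓ : 2 ≤ ℓ) (θ : ZMod ℓ → ℂ)
    (ha : ∑ i : ZMod ℓ, θ i ≠ 0) (d : ZMod ℓ → ℕ) :
    d ∈ Eset ℓ θ ↔
      ∃ (n : ℕ) (θ' : ZMod ℓ → ℂ),
        Relation.EqvGen (MoveRel ℓ) ((fun i => (d i : ℤ)), θ) ((fun _ => (n : ℤ)), θ') := by
  constructor
  · intro h
    exact GSet_descend hℓ _ θ d rfl (GSet_of_mem_Eset h)
  · rintro ⟨n, θ', h⟩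
    obtain ⟨h1, h2⟩ := good_eqv hℓ h
    have hg : Good ℓ ((fun _ => (n : ℤ)), θ') :=
      ⟨fun _ => n, rfl, GSet_ndelta ℓ hℓ θ' (by simp only at h2; rwa [← h2]) n⟩
    obtain ⟨d', hd', hG⟩ := h1.mpr hg
    have : d' = d := by
      funext i
      have := congrFun hd' i
      simp only at this
      exact_mod_cast this
    rw [← this]
    exact mem_Eset_of_GSet hG

end CM
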